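/- (Information state implies agent-state class collapse) If the agent state satisfies properties (P1) and (P2) (is an information state), then the optimal values over the four agent-state-based policy classes coincide: sup over stationary deterministic = sup over stationary stochastic = sup over non-stationary deterministic = sup over non-stationary stochastic agent-state policies, and all equal the optimal history-based value J*. -/

import Mathlib

open scoped BigOperators

section

variable {S A Y Z : Type*} [Fintype S] [Fintype A] [Fintype Y] [Fintype Z]

/-- Probability of a trajectory `(S_t,Y_t,A_t), …, (S_1,Y_1,A_1)` (listed most-recent
first) of a POMDP with initial law `ν` of `(S₁,Y₁)`, dynamics `P(s',y'|s,a)`, and a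
history-dependent stochastic policy `π(a | past (y,a)-pairs, current y)`. -/
noncomputable def probTraj (ν : S × Y → ℝ) (P : S → A → S × Y → ℝ)
    (π : List (Y × A) → Y → A → ℝ) : List (S × Y × A) → ℝ
  | [] => 1
  | (s, y, a) :: rest =>
      (match rest with
        | [] => ν (s, y)
        | (s₀, _, a₀) :: _ => P s₀ a₀ (s, y)) *
        π (rest.map fun u => (u.2.1, u.2.2)) y a * probTraj ν P π rest

/-- A valid (history-dependent) stochastic policy. -/
def validPol (π : List (Y × A) → Y → A → ℝ) : Prop :=
  ∀ h y, (∀ a, 0 ≤ π h y a) ∧ ∑ a, π h y a = 1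

/-- Expected reward at time `t+1` (trajectories are indexed chronologically by `Fin (t+1)`
and reversed into the most-recent-first convention). -/
noncomputable def expRtime (ν : S × Y → ℝ) (P : S → A → S × Y → ℝ) (r : S → A → ℝ)
    (π : List (Y × A) → Y → A → ℝ) (t : ℕ) : ℝ :=
  ∑ v : Fin (t + 1) → S × Y × A,
    probTraj ν P π (List.ofFn v).reverse * r (v (Fin.last t)).1 (v (Fin.last t)).2.2

/-- Performance `J^π = E^π[∑_{t≥1} γ^{t−1} R_t]` of a history-dependent policy. -/
noncomputable def valJ (γ : ℝ) (ν : S × Y → ℝ) (P : S → A → S × Y → ℝ)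
    (r : S → A → ℝ) (π : List (Y × A) → Y → A → ℝ) : ℝ :=
  ∑' t : ℕ, γ ^ t * expRtime ν P r π t

/-- The agent state `Z_t = σ_t(H_t)` generated by the recursive update
`Z₁ = φ₀(Y₁)`, `Z_{t+1} = φ(Z_t, Y_{t+1}, A_t)`; the history is given as the list of
past `(y,a)` pairs (most recent first) together with the current observation. -/
def sigAgg (φ0 : Y → Z) (φ : Z → Y → A → Z) : List (Y × A) → Y → Z
  | [], y => φ0 y
  | (y', a') :: rest, y => φ (sigAgg φ0 φ rest y') y a'

/-- The full trajectory obtained by attaching a state sequence to an observation-action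
history (most recent first). -/
def zipSV (w : List (Y × A)) (sv : Fin w.length → S) : List (S × Y × A) :=
  List.ofFn fun i => (sv i, (w.get i).1, (w.get i).2)

/-- Probability of observing the observation-action history `w` (most recent first). -/
noncomputable def histProb (ν : S × Y → ℝ) (P : S → A → S × Y → ℝ)
    (π : List (Y × A) → Y → A → ℝ) (w : List (Y × A)) : ℝ :=
  ∑ sv : Fin w.length → S, probTraj ν P π (zipSV w sv)

end

section

theorem exists_bellman_solution {A Z : Type*} [Fintype A] [Fintype Z] [Nonempty A]
    {γ : ℝ} (hγ0 : 0 ≤ γ) (hγ1 : γ < 1) (r : Z → A → ℝ) (K : Z → A → Z → ℝ)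
    (hK0 : ∀ z a z', 0 ≤ K z a z') (hK1 : ∀ z a, ∑ z', K z a z' ≤ 1) :
    ∃ (V : Z → ℝ) (g : Z → A),
      (∀ z a, r z a + γ * ∑ z', K z a z' * V z' ≤ V z) ∧
      ∀ z, r z (g z) + γ * ∑ z', K z (g z) z' * V z' = V z := by
  set Q : (Z → ℝ) → Z → A → ℝ := fun V z a => r z a + γ * ∑ z', K z a z' * V z' with hQ
  set B : (Z → ℝ) → Z → ℝ := fun V z => Finset.univ.sup' Finset.univ_nonempty (Q V z) with hB
  have hQd : ∀ V W z a, Q V z a ≤ Q W z a + γ * dist V W := by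
    intro V W z a
    have h : ∑ z', K z a z' * V z' ≤ ∑ z', K z a z' * W z' + dist V W := by
      calc ∑ z', K z a z' * V z' ≤ ∑ z', (K z a z' * W z' + K z a z' * dist V W) := by
            refine Finset.sum_le_sum fun z' _ => ?_
            rw [← mul_add]
            refine mul_le_mul_of_nonneg_left ?_ (hK0 z a z')
            have h1 := (le_abs_self _).trans (dist_le_pi_dist V W z')
            linarith
        _ = ∑ z', K z a z' * W z' + (∑ z', K z a z') * dist V W := by
            rw [Finset.sum_add_distrib, Finset.sum_mul]
        _ ≤ _ := by nlinarith [hK1 z a, dist_nonneg (x := V) (y := W)]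
    have h2 := mul_le_mul_of_nonneg_left h hγ0
    simp only [hQ]
    linarith
  have hBd : ∀ V W z, B V z ≤ B W z + γ * dist V W := by
    intro V W z
    refine Finset.sup'_le _ _ fun a _ => (hQd V W z a).trans ?_
    have h := Finset.le_sup' (Q W z) (Finset.mem_univ a)
    simp only [hB]
    linarith
  have hlip : LipschitzWith ⟨γ, hγ0⟩ B := by
    refine LipschitzWith.of_dist_le_mul fun V W => ?_
    have hnn : 0 ≤ γ * dist V W := mul_nonneg hγ0 dist_nonneg
    refine (dist_pi_le_iff hnn).2 fun z => ?_
    rw [Real.dist_eq, abs_le]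
    have h1 := hBd V W z
    have h2 := hBd W V z
    rw [dist_comm W V] at h2
    constructor <;> linarith
  have hc : ContractingWith ⟨γ, hγ0⟩ B := ⟨by exact_mod_cast hγ1, hlip⟩
  set V := hc.fixedPoint B
  have hV : ∀ z, B V z = V z := fun z => congrFun hc.fixedPoint_isFixedPt z
  have hg : ∀ z, ∃ a, B V z = Q V z a := fun z => by
    obtain ⟨a, -, ha⟩ := Finset.exists_mem_eq_sup' Finset.univ_nonempty (Q V z)
    exact ⟨a, ha⟩
  choose g hg using hg
  refine ⟨V, g, fun z a => ?_, fun z => ?_⟩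
  · rw [← hV z]
    exact Finset.le_sup' (Q V z) (Finset.mem_univ a)
  · rw [← hV z, hg z]

theorem sum_ofFn_succ {X : Type*} [Fintype X] (n : ℕ) (F : List X → ℝ) :
    ∑ v : Fin (n + 1) → X, F (List.ofFn v) = ∑ x, ∑ v : Fin n → X, F (x :: List.ofFn v) := by
  rw [← Fintype.sum_prod_type',
    ← (Fin.consEquiv fun _ : Fin (n + 1) => X).sum_comp (fun v => F (List.ofFn v))]
  simp [Fin.consEquiv, List.ofFn_succ]

theorem ciSup_subtype_eq_of_forall_le {X : Type*} {p : X → Prop} {f : X → ℝ} {x₀ : X}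
    (h₀ : p x₀) (h : ∀ x, p x → f x ≤ f x₀) : (⨆ x : {x // p x}, f x.1) = f x₀ := by
  have : Nonempty {x // p x} := ⟨⟨x₀, h₀⟩⟩
  refine le_antisymm (ciSup_le fun x => h _ x.2) ?_
  refine le_ciSup (f := fun x : {x // p x} => f x.1) ?_ ⟨x₀, h₀⟩
  exact ⟨f x₀, by rintro _ ⟨x, rfl⟩; exact h _ x.2⟩

end

section

variable {S A Y : Type*}

theorem zipSV_cons (p : Y × A) (w : List (Y × A)) (s : S) (sv : Fin w.length → S) :
    zipSV (p :: w) (Fin.cons s sv : Fin (w.length + 1) → S) = (s, p) :: zipSV w sv := by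
  simp [zipSV, List.ofFn_succ]

theorem map_snd_zipSV (w : List (Y × A)) (sv : Fin w.length → S) :
    (zipSV w sv).map (fun u => (u.2.1, u.2.2)) = w := by
  simp [zipSV, List.map_ofFn, Function.comp_def]

theorem probTraj_nonneg [Fintype A] {ν : S × Y → ℝ} {P : S → A → S × Y → ℝ}
    {π : List (Y × A) → Y → A → ℝ} (hν0 : ∀ sy, 0 ≤ ν sy) (hP0 : ∀ s a sy, 0 ≤ P s a sy)
    (hπ : validPol π) (l : List (S × Y × A)) : 0 ≤ probTraj ν P π l := by
  induction l with
  | nil => simp [probTraj]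
  | cons x l ih =>
    obtain ⟨s, y, a⟩ := x
    refine mul_nonneg (mul_nonneg ?_ ((hπ _ _).1 _)) ih
    cases l with
    | nil => exact hν0 _
    | cons => exact hP0 _ _ _

theorem sum_states_cons [Fintype S] (p : Y × A) (w : List (Y × A)) (F : S → List (S × Y × A) → ℝ) :
    ∑ sv : Fin (p :: w).length → S, F (sv ⟨0, by simp⟩) (zipSV (p :: w) sv) =
      ∑ s, ∑ sv : Fin w.length → S, F s ((s, p) :: zipSV w sv) := by
  rw [← Fintype.sum_prod_type']
  refine (Equiv.sum_comp (Fin.consEquiv fun _ : Fin (w.length + 1) => S)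
    fun sv : Fin (w.length + 1) → S => F (sv 0) (zipSV (p :: w) sv)).symm.trans ?_
  refine Finset.sum_congr rfl fun x _ => ?_
  simp only [Fin.consEquiv, Equiv.coe_fn_mk]
  rw [zipSV_cons]
  rfl

theorem histProb_nonneg [Fintype S] [Fintype A] {ν : S × Y → ℝ} {P : S → A → S × Y → ℝ}
    {π : List (Y × A) → Y → A → ℝ} (hν0 : ∀ sy, 0 ≤ ν sy) (hP0 : ∀ s a sy, 0 ≤ P s a sy)
    (hπ : validPol π) (w : List (Y × A)) : 0 ≤ histProb ν P π w :=
  Finset.sum_nonneg fun _ _ => probTraj_nonneg hν0 hP0 hπ _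

end

section

variable {S A Y : Type*} [Fintype S] [Fintype A] [Fintype Y]

theorem histProb_cons (ν : S × Y → ℝ) (P : S → A → S × Y → ℝ)
    (π : List (Y × A) → Y → A → ℝ) (p : Y × A) (w : List (Y × A)) :
    histProb ν P π (p :: w) =
      ∑ s, ∑ sv : Fin w.length → S, probTraj ν P π ((s, p) :: zipSV w sv) :=
  sum_states_cons p w fun _ l => probTraj ν P π l

theorem sum_traj_eq_sum_hist (n : ℕ) (F : List (S × Y × A) → ℝ) :
    ∑ v : Fin n → S × Y × A, F (List.ofFn v) =
      ∑ u : Fin n → Y × A, ∑ sv : Fin (List.ofFn u).length → S, F (zipSV (List.ofFn u) sv) := by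
  induction n generalizing F with
  | zero =>
    have h : ∀ w : List (Y × A), w = [] → ∑ sv : Fin w.length → S, F (zipSV w sv) = F [] := by
      rintro _ rfl
      simp [zipSV]
    simp [h]
  | succ n ih =>
    rw [sum_ofFn_succ, sum_ofFn_succ n
      (fun w : List (Y × A) => ∑ sv : Fin w.length → S, F (zipSV w sv)),
      Fintype.sum_prod_type, Finset.sum_comm]
    refine Finset.sum_congr rfl fun p _ => ?_
    simp_rw [fun w => sum_states_cons (S := S) p w fun _ l => F l]
    refine Eq.trans ?_ Finset.sum_comm
    exact Finset.sum_congr rfl fun s _ => ih fun l => F ((s, p) :: l)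

theorem histProb_cons_eq_zero {ν : S × Y → ℝ} {P : S → A → S × Y → ℝ}
    {π : List (Y × A) → Y → A → ℝ} {y : Y} {a : A} {w : List (Y × A)} (h : π w y a = 0) :
    histProb ν P π ((y, a) :: w) = 0 := by
  rw [histProb_cons]
  refine Finset.sum_eq_zero fun s _ => Finset.sum_eq_zero fun sv _ => ?_
  change _ * π ((zipSV w sv).map fun u => (u.2.1, u.2.2)) y a * _ = 0
  rw [map_snd_zipSV, h, mul_zero, zero_mul]

theorem sum_histProb_singleton (ν : S × Y → ℝ) (P : S → A → S × Y → ℝ)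
    {π : List (Y × A) → Y → A → ℝ} (hπ : validPol π) (h : Y → ℝ) :
    ∑ p : Y × A, histProb ν P π [p] * h p.1 = ∑ sy : S × Y, ν sy * h sy.2 := by
  rw [Fintype.sum_prod_type, Fintype.sum_prod_type_right]
  refine Finset.sum_congr rfl fun y _ => ?_
  have e : ∀ a, histProb ν P π [(y, a)] = ∑ s, ν (s, y) * π [] y a := fun a => by
    rw [histProb_cons]
    simp [probTraj, zipSV]
  simp_rw [e, ← Finset.sum_mul, ← Finset.mul_sum, (hπ [] y).2, mul_one]

theorem sum_histProb_cons_cons (ν : S × Y → ℝ) (P : S → A → S × Y → ℝ)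
    {π : List (Y × A) → Y → A → ℝ} (hπ : validPol π) (y : Y) (a : A) (w : List (Y × A))
    (h : Y → ℝ) :
    ∑ p : Y × A, histProb ν P π (p :: (y, a) :: w) * h p.1 =
      ∑ s, ∑ sv : Fin w.length → S, ∑ sy : S × Y,
        probTraj ν P π ((s, y, a) :: zipSV w sv) * P s a sy * h sy.2 := by
  have e : ∀ p : Y × A, histProb ν P π (p :: (y, a) :: w) = ∑ s' : S, ∑ s : S,
      ∑ sv : Fin w.length → S, P s a (s', p.1) * π ((y, a) :: w) p.1 p.2 *
        probTraj ν P π ((s, y, a) :: zipSV w sv) := fun p => by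
    rw [histProb_cons]
    refine Finset.sum_congr rfl fun s' _ => ?_
    rw [sum_states_cons (y, a) w fun _ l => probTraj ν P π ((s', p) :: l)]
    refine Finset.sum_congr rfl fun s _ => Finset.sum_congr rfl fun sv _ => ?_
    rw [probTraj, List.map_cons, map_snd_zipSV]
  simp_rw [e, Finset.sum_mul]
  calc _ = ∑ y' : Y, ∑ s' : S, ∑ s : S, ∑ sv : Fin w.length → S,
        ∑ a' : A, P s a (s', y') * π ((y, a) :: w) y' a' *
          probTraj ν P π ((s, y, a) :: zipSV w sv) * h y' := by
        rw [Fintype.sum_prod_type]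
        refine Finset.sum_congr rfl fun y' _ => ?_
        rw [Finset.sum_comm]
        refine Finset.sum_congr rfl fun s' _ => ?_
        rw [Finset.sum_comm]
        refine Finset.sum_congr rfl fun s _ => ?_
        rw [Finset.sum_comm]
    _ = ∑ y' : Y, ∑ s' : S, ∑ s : S, ∑ sv : Fin w.length → S,
        probTraj ν P π ((s, y, a) :: zipSV w sv) * P s a (s', y') * h y' := by
        simp_rw [← Finset.sum_mul, ← Finset.mul_sum, (hπ _ _).2]
        simp_rw [mul_one, mul_comm]
    _ = ∑ sy : S × Y, ∑ s : S, ∑ sv : Fin w.length → S,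
        probTraj ν P π ((s, y, a) :: zipSV w sv) * P s a sy * h sy.2 := by
        rw [Fintype.sum_prod_type_right]
    _ = _ := by
        rw [Finset.sum_comm]
        refine Finset.sum_congr rfl fun s _ => ?_
        rw [Finset.sum_comm]

/-- Expectation of `f past y a`, where `y` and `a` are the observation and action at time `t + 1`
and `past` is the history of the first `t` observation-action pairs. -/
noncomputable def histExp (ν : S × Y → ℝ) (P : S → A → S × Y → ℝ)
    (π : List (Y × A) → Y → A → ℝ) (t : ℕ) (f : List (Y × A) → Y → A → ℝ) : ℝ :=
  ∑ p : Y × A, ∑ u : Fin t → Y × A,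
    histProb ν P π (p :: List.ofFn u) * f (List.ofFn u) p.1 p.2

theorem histExp_congr {ν : S × Y → ℝ} {P : S → A → S × Y → ℝ}
    {π : List (Y × A) → Y → A → ℝ} {t : ℕ} {f g : List (Y × A) → Y → A → ℝ}
    (h : ∀ w y a, histProb ν P π ((y, a) :: w) * f w y a =
      histProb ν P π ((y, a) :: w) * g w y a) :
    histExp ν P π t f = histExp ν P π t g :=
  Finset.sum_congr rfl fun _ _ => Finset.sum_congr rfl fun _ _ => h _ _ _

theorem histExp_mono {ν : S × Y → ℝ} {P : S → A → S × Y → ℝ}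
    {π : List (Y × A) → Y → A → ℝ} {t : ℕ} {f g : List (Y × A) → Y → A → ℝ}
    (h : ∀ w y a, histProb ν P π ((y, a) :: w) * f w y a ≤
      histProb ν P π ((y, a) :: w) * g w y a) :
    histExp ν P π t f ≤ histExp ν P π t g :=
  Finset.sum_le_sum fun _ _ => Finset.sum_le_sum fun _ _ => h _ _ _

theorem histExp_add_mul (ν : S × Y → ℝ) (P : S → A → S × Y → ℝ)
    (π : List (Y × A) → Y → A → ℝ) (t : ℕ) (f g : List (Y × A) → Y → A → ℝ) (c : ℝ) :
    histExp ν P π t f + c * histExp ν P π t g =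
      histExp ν P π t fun w y a => f w y a + c * g w y a := by
  simp only [histExp, Finset.mul_sum, ← Finset.sum_add_distrib]
  refine Finset.sum_congr rfl fun _ _ => Finset.sum_congr rfl fun _ _ => ?_
  ring

theorem histExp_zero (ν : S × Y → ℝ) (P : S → A → S × Y → ℝ)
    {π : List (Y × A) → Y → A → ℝ} (hπ : validPol π) (f : List (Y × A) → Y → ℝ) :
    histExp ν P π 0 (fun w y _ => f w y) = ∑ sy : S × Y, ν sy * f [] sy.2 := by
  rw [← sum_histProb_singleton ν P hπ (f [])]
  simp [histExp]

theorem histExp_succ (ν : S × Y → ℝ) (P : S → A → S × Y → ℝ)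
    {π : List (Y × A) → Y → A → ℝ} (hπ : validPol π) (t : ℕ) (f : List (Y × A) → Y → ℝ) :
    histExp ν P π (t + 1) (fun w y _ => f w y) =
      ∑ p : Y × A, ∑ u : Fin t → Y × A, ∑ s, ∑ sv : Fin (List.ofFn u).length → S,
        ∑ sy : S × Y, probTraj ν P π ((s, p) :: zipSV (List.ofFn u) sv) * P s p.2 sy *
          f (p :: List.ofFn u) sy.2 := by
  unfold histExp
  simp_rw [fun q : Y × A => sum_ofFn_succ t fun w => histProb ν P π (q :: w) * f w q.1]
  rw [Finset.sum_comm]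
  refine Finset.sum_congr rfl fun p _ => ?_
  rw [Finset.sum_comm]
  refine Finset.sum_congr rfl fun u _ => ?_
  exact sum_histProb_cons_cons ν P hπ p.1 p.2 (List.ofFn u) (f (p :: List.ofFn u))

theorem histExp_one {ν : S × Y → ℝ} {P : S → A → S × Y → ℝ}
    (hν1 : ∑ sy : S × Y, ν sy = 1) (hP1 : ∀ s a, ∑ sy : S × Y, P s a sy = 1)
    {π : List (Y × A) → Y → A → ℝ} (hπ : validPol π) (t : ℕ) :
    histExp ν P π t (fun _ _ _ => 1) = 1 := by
  induction t with
  | zero => simpa [hν1] using histExp_zero ν P hπ fun _ _ => 1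
  | succ t ih =>
    rw [histExp_succ ν P hπ t fun _ _ => 1]
    refine Eq.trans ?_ ih
    simp_rw [mul_one, ← Finset.mul_sum, hP1, mul_one, histExp, histProb_cons, mul_one]

theorem abs_histExp_le {ν : S × Y → ℝ} {P : S → A → S × Y → ℝ}
    (hν0 : ∀ sy, 0 ≤ ν sy) (hν1 : ∑ sy : S × Y, ν sy = 1)
    (hP0 : ∀ s a sy, 0 ≤ P s a sy) (hP1 : ∀ s a, ∑ sy : S × Y, P s a sy = 1)
    {π : List (Y × A) → Y → A → ℝ} (hπ : validPol π) (t : ℕ)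
    {f : List (Y × A) → Y → A → ℝ} {C : ℝ} (hf : ∀ w y a, |f w y a| ≤ C) :
    |histExp ν P π t f| ≤ C := by
  calc |histExp ν P π t f| ≤ ∑ p : Y × A, ∑ u : Fin t → Y × A,
        histProb ν P π (p :: List.ofFn u) * 1 * C := by
        refine (Finset.abs_sum_le_sum_abs _ _).trans (Finset.sum_le_sum fun p _ => ?_)
        refine (Finset.abs_sum_le_sum_abs _ _).trans (Finset.sum_le_sum fun u _ => ?_)
        have h0 := histProb_nonneg hν0 hP0 hπ (p :: List.ofFn u)
        rw [abs_mul, abs_of_nonneg h0, mul_one]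
        exact mul_le_mul_of_nonneg_left (hf _ _ _) h0
    _ = histExp ν P π t (fun _ _ _ => 1) * C := by
        simp_rw [histExp, Finset.sum_mul]
    _ = C := by rw [histExp_one hν1 hP1 hπ, one_mul]

theorem expRtime_eq (ν : S × Y → ℝ) (P : S → A → S × Y → ℝ) (r : S → A → ℝ)
    (π : List (Y × A) → Y → A → ℝ) (t : ℕ) :
    expRtime ν P r π t = ∑ p : Y × A, ∑ u : Fin t → Y × A, ∑ s,
      ∑ sv : Fin (List.ofFn u).length → S,
        probTraj ν P π ((s, p) :: zipSV (List.ofFn u) sv) * r s p.2 := by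
  have e : expRtime ν P r π t = ∑ x : S × Y × A, ∑ v : Fin t → S × Y × A,
      probTraj ν P π (x :: List.ofFn v) * r x.1 x.2.2 := by
    rw [expRtime, ← Fintype.sum_prod_type', ← (Equiv.arrowCongr Fin.revPerm
      (Equiv.refl (S × Y × A))).sum_comp, ← (Fin.consEquiv fun _ : Fin (t + 1) =>
        S × Y × A).sum_comp]
    refine Finset.sum_congr rfl fun x _ => ?_
    have h : (List.ofFn (Equiv.arrowCongr Fin.revPerm (Equiv.refl (S × Y × A))
        (Fin.cons x.1 x.2))).reverse = x.1 :: List.ofFn x.2 := by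
      rw [← List.ofFn_cons]
      apply List.ext_getElem
      · simp
      · intro i h1 h2
        rw [List.length_ofFn] at h2
        rw [List.getElem_reverse, List.getElem_ofFn, List.getElem_ofFn]
        refine congrArg (Fin.cons x.1 x.2 : Fin (t + 1) → S × Y × A) (Fin.ext ?_)
        simp [Fin.val_rev]
        omega
    simp only [Fin.consEquiv, Equiv.coe_fn_mk]
    rw [h]
    simp
  rw [e, Fintype.sum_prod_type, Finset.sum_comm]
  refine Finset.sum_congr rfl fun p _ => ?_
  rw [Finset.sum_comm]
  have h : ∀ s : S, ∑ v : Fin t → S × Y × A, probTraj ν P π ((s, p) :: List.ofFn v) * r s p.2 =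
      _ := fun s => sum_traj_eq_sum_hist t fun l => probTraj ν P π ((s, p) :: l) * r s p.2
  rw [Finset.sum_comm]
  simp_rw [h]
  rw [Finset.sum_comm]

end

section

variable {S A Y Z : Type*} [Fintype S] [Fintype A] [Fintype Y] [Fintype Z]
variable [DecidableEq A]

/-- Stationary deterministic agent-state based policies. -/
def isSD (φ0 : Y → Z) (φ : Z → Y → A → Z) (π : List (Y × A) → Y → A → ℝ) : Prop :=
  ∃ g : Z → A, ∀ past y a, π past y a = if a = g (sigAgg φ0 φ past y) then 1 else 0

/-- Stationary stochastic agent-state based policies. -/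
def isSS (φ0 : Y → Z) (φ : Z → Y → A → Z) (π : List (Y × A) → Y → A → ℝ) : Prop :=
  ∃ g : Z → A → ℝ, ∀ past y, π past y = g (sigAgg φ0 φ past y)

/-- Non-stationary deterministic agent-state based policies. -/
def isND (φ0 : Y → Z) (φ : Z → Y → A → Z) (π : List (Y × A) → Y → A → ℝ) : Prop :=
  ∃ g : ℕ → Z → A, ∀ past y a,
    π past y a = if a = g past.length (sigAgg φ0 φ past y) then 1 else 0

/-- Non-stationary stochastic agent-state based policies. -/
def isNS (φ0 : Y → Z) (φ : Z → Y → A → Z) (π : List (Y × A) → Y → A → ℝ) : Prop :=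
  ∃ g : ℕ → Z → A → ℝ, ∀ past y, π past y = g past.length (sigAgg φ0 φ past y)

/-- **Information state implies collapse of the agent-state policy classes.** If the
agent state satisfies (P1) and (P2), then the optimal values over stationary
deterministic, stationary stochastic, non-stationary deterministic and non-stationary
stochastic agent-state policies all coincide with the optimal history-based value `J*`. -/
theorem stmt_17 [DecidableEq Z] [Nonempty A]
    (γ : ℝ) (hγ0 : 0 < γ) (hγ1 : γ < 1)
    (Rmax : ℝ) (r : S → A → ℝ) (hr : ∀ s a, r s a ∈ Set.Icc (0 : ℝ) Rmax)
    (ν : S × Y → ℝ) (hν0 : ∀ sy, 0 ≤ ν sy) (hν1 : ∑ sy : S × Y, ν sy = 1)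
    (P : S → A → S × Y → ℝ) (hP0 : ∀ s a sy, 0 ≤ P s a sy)
    (hP1 : ∀ s a, ∑ sy : S × Y, P s a sy = 1)
    (φ0 : Y → Z) (φ : Z → Y → A → Z)
    (rIS : Z → A → ℝ) (PIS : Z → A → Z → ℝ)
    -- (P1): sufficient for performance evaluation
    (hIS1 : ∀ π : List (Y × A) → Y → A → ℝ, validPol π →
      ∀ (y : Y) (a : A) (past : List (Y × A)),
        0 < histProb ν P π ((y, a) :: past) →
        (∑ sv : Fin ((y, a) :: past).length → S,
            probTraj ν P π (zipSV ((y, a) :: past) sv) * r (sv ⟨0, by simp⟩) a) /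
          histProb ν P π ((y, a) :: past) = rIS (sigAgg φ0 φ past y) a)
    -- (P2): sufficient for predicting itself
    (hIS2 : ∀ π : List (Y × A) → Y → A → ℝ, validPol π →
      ∀ (y : Y) (a : A) (past : List (Y × A)) (z' : Z),
        0 < histProb ν P π ((y, a) :: past) →
        (∑ sv : Fin ((y, a) :: past).length → S, ∑ sy' : S × Y,
            probTraj ν P π (zipSV ((y, a) :: past) sv) * P (sv ⟨0, by simp⟩) a sy' *
              (if z' = φ (sigAgg φ0 φ past y) sy'.2 a then 1 else 0)) /
          histProb ν P π ((y, a) :: past) = PIS (sigAgg φ0 φ past y) a z') :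
    (⨆ π : {π : List (Y × A) → Y → A → ℝ // validPol π ∧ isSD φ0 φ π},
        valJ γ ν P r π.1) =
      (⨆ π : {π : List (Y × A) → Y → A → ℝ // validPol π}, valJ γ ν P r π.1) ∧
    (⨆ π : {π : List (Y × A) → Y → A → ℝ // validPol π ∧ isSS φ0 φ π},
        valJ γ ν P r π.1) =
      (⨆ π : {π : List (Y × A) → Y → A → ℝ // validPol π}, valJ γ ν P r π.1) ∧
    (⨆ π : {π : List (Y × A) → Y → A → ℝ // validPol π ∧ isND φ0 φ π},
        valJ γ ν P r π.1) =
      (⨆ π : {π : List (Y × A) → Y → A → ℝ // validPol π}, valJ γ ν P r π.1) ∧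
    (⨆ π : {π : List (Y × A) → Y → A → ℝ // validPol π ∧ isNS φ0 φ π},
        valJ γ ν P r π.1) =
      (⨆ π : {π : List (Y × A) → Y → A → ℝ // validPol π}, valJ γ ν P r π.1) := by
  have hPr : ∀ π : List (Y × A) → Y → A → ℝ, validPol π → ∀ l, 0 ≤ probTraj ν P π l :=
    fun π hπ => probTraj_nonneg hν0 hP0 hπ
  have hH : ∀ π : List (Y × A) → Y → A → ℝ, validPol π → ∀ w, 0 ≤ histProb ν P π w :=
    fun π hπ => histProb_nonneg hν0 hP0 hπ
  have hzero : ∀ π : List (Y × A) → Y → A → ℝ, validPol π → ∀ p w,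
      histProb ν P π (p :: w) = 0 → ∀ s (sv : Fin w.length → S),
        probTraj ν P π ((s, p) :: zipSV w sv) = 0 := by
    intro π hπ p w h s sv
    rw [histProb_cons] at h
    have h1 := (Finset.sum_eq_zero_iff_of_nonneg fun s _ =>
      Finset.sum_nonneg fun sv _ => hPr π hπ _).1 h s (Finset.mem_univ _)
    exact (Finset.sum_eq_zero_iff_of_nonneg fun sv _ => hPr π hπ _).1 h1 sv (Finset.mem_univ _)
  have hR : ∀ π : List (Y × A) → Y → A → ℝ, validPol π → ∀ t,
      expRtime ν P r π t = histExp ν P π t fun w y a => rIS (sigAgg φ0 φ w y) a := by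
    intro π hπ t
    rw [expRtime_eq, histExp]
    refine Finset.sum_congr rfl fun p _ => Finset.sum_congr rfl fun u _ => ?_
    obtain ⟨y, a⟩ := p
    rcases (hH π hπ ((y, a) :: List.ofFn u)).eq_or_lt with h | h
    · simp [hzero π hπ _ _ h.symm, ← h]
    · rw [← hIS1 π hπ y a (List.ofFn u) h, mul_div_cancel₀ _ h.ne',
        sum_states_cons (y, a) (List.ofFn u) fun s l => probTraj ν P π l * r s a]
  have hT : ∀ π : List (Y × A) → Y → A → ℝ, validPol π → ∀ y a w (z' : Z),
      ∑ s, ∑ sv : Fin w.length → S, ∑ sy : S × Y,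
        probTraj ν P π ((s, y, a) :: zipSV w sv) * P s a sy *
          (if z' = φ (sigAgg φ0 φ w y) sy.2 a then 1 else 0) =
        histProb ν P π ((y, a) :: w) * PIS (sigAgg φ0 φ w y) a z' := by
    intro π hπ y a w z'
    rcases (hH π hπ ((y, a) :: w)).eq_or_lt with h | h
    · simp [hzero π hπ _ _ h.symm, ← h]
    · rw [← hIS2 π hπ y a w z' h, mul_div_cancel₀ _ h.ne',
        sum_states_cons (y, a) w fun s l => ∑ sy : S × Y, probTraj ν P π l * P s a sy *
          (if z' = φ (sigAgg φ0 φ w y) sy.2 a then 1 else 0)]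
  have hU : ∀ π : List (Y × A) → Y → A → ℝ, validPol π → ∀ (V : Z → ℝ) t,
      histExp ν P π (t + 1) (fun w y _ => V (sigAgg φ0 φ w y)) =
        histExp ν P π t fun w y a =>
          ∑ z', PIS (sigAgg φ0 φ w y) a z' * V z' := by
    intro π hπ V t
    rw [histExp_succ ν P hπ t fun w y => V (sigAgg φ0 φ w y), histExp]
    refine Finset.sum_congr rfl fun p _ => Finset.sum_congr rfl fun u _ => ?_
    obtain ⟨y, a⟩ := p
    simp_rw [Finset.mul_sum, ← mul_assoc, ← hT π hπ, Finset.sum_mul]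
    refine Eq.trans ?_ Finset.sum_comm
    refine Finset.sum_congr rfl fun s _ => ?_
    refine Eq.trans ?_ Finset.sum_comm
    refine Finset.sum_congr rfl fun sv _ => ?_
    refine Eq.trans ?_ Finset.sum_comm
    refine Finset.sum_congr rfl fun sy _ => ?_
    simp [sigAgg]
  have hsub : ∀ π : List (Y × A) → Y → A → ℝ, validPol π → ∀ y a w,
      0 < histProb ν P π ((y, a) :: w) →
        (∀ z', 0 ≤ PIS (sigAgg φ0 φ w y) a z') ∧ ∑ z', PIS (sigAgg φ0 φ w y) a z' ≤ 1 := by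
    intro π hπ y a w h
    constructor
    · intro z'
      refine nonneg_of_mul_nonneg_right ?_ h
      rw [← hT π hπ]
      refine Finset.sum_nonneg fun s _ => Finset.sum_nonneg fun sv _ =>
        Finset.sum_nonneg fun sy _ => mul_nonneg (mul_nonneg (hPr π hπ _) (hP0 _ _ _)) ?_
      split_ifs <;> norm_num
    · refine le_of_eq (mul_left_cancel₀ h.ne' ?_)
      rw [Finset.mul_sum, mul_one]
      simp_rw [← hT π hπ]
      rw [Finset.sum_comm, histProb_cons]
      refine Finset.sum_congr rfl fun s _ => ?_
      rw [Finset.sum_comm]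
      refine Finset.sum_congr rfl fun sv _ => ?_
      rw [Finset.sum_comm]
      simp_rw [← Finset.mul_sum]
      simp [← Finset.mul_sum, hP1]
  -- Off the reachable set `PIS` is arbitrary, so it is truncated to a substochastic kernel.
  classical
  set K : Z → A → Z → ℝ := fun z a z' =>
    if (∀ z', 0 ≤ PIS z a z') ∧ ∑ z', PIS z a z' ≤ 1 then PIS z a z' else 0 with hK
  obtain ⟨V, g, hV, hg⟩ := exists_bellman_solution hγ0.le hγ1 rIS K
    (fun z a z' => by
      simp only [hK]
      split_ifs with h
      exacts [h.1 z', le_rfl])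
    (fun z a => by
      by_cases h : (∀ z', 0 ≤ PIS z a z') ∧ ∑ z', PIS z a z' ≤ 1
      · simpa only [hK, if_pos h] using h.2
      · simp only [hK, if_neg h, Finset.sum_const_zero, zero_le_one])
  have hKP : ∀ π : List (Y × A) → Y → A → ℝ, validPol π → ∀ y a w,
      0 < histProb ν P π ((y, a) :: w) → ∀ z',
        PIS (sigAgg φ0 φ w y) a z' = K (sigAgg φ0 φ w y) a z' := by
    intro π hπ y a w h z'
    simp only [hK, if_pos (hsub π hπ y a w h)]
  set U : (List (Y × A) → Y → A → ℝ) → ℕ → ℝ := fun π t =>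
    histExp ν P π t fun w y _ => V (sigAgg φ0 φ w y) with hUdef
  have hstep : ∀ π : List (Y × A) → Y → A → ℝ, validPol π → ∀ t,
      expRtime ν P r π t + γ * U π (t + 1) ≤ U π t := by
    intro π hπ t
    simp only [hUdef]
    rw [hR π hπ, hU π hπ, histExp_add_mul]
    refine histExp_mono fun w y a => ?_
    rcases (hH π hπ ((y, a) :: w)).eq_or_lt with h | h
    · simp [← h]
    · simp_rw [hKP π hπ y a w h]
      exact mul_le_mul_of_nonneg_left (hV _ _) h.le
  set πg : List (Y × A) → Y → A → ℝ := fun w y a =>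
    if a = g (sigAgg φ0 φ w y) then 1 else 0 with hπg
  have hvg : validPol πg := fun w y => by
    refine ⟨fun a => ?_, by simp [hπg]⟩
    simp only [hπg]
    split_ifs <;> norm_num
  have hstepg : ∀ t, expRtime ν P r πg t + γ * U πg (t + 1) = U πg t := by
    intro t
    simp only [hUdef]
    rw [hR πg hvg, hU πg hvg, histExp_add_mul]
    refine histExp_congr fun w y a => ?_
    by_cases ha : a = g (sigAgg φ0 φ w y)
    · rcases (hH πg hvg ((y, a) :: w)).eq_or_lt with h | h
      · simp [← h]
      · simp_rw [hKP πg hvg y a w h]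
        rw [ha, hg]
    · rw [histProb_cons_eq_zero (by simp [hπg, ha])]
      simp
  have hUb : ∀ π : List (Y × A) → Y → A → ℝ, validPol π → ∀ t, |U π t| ≤ ‖V‖ :=
    fun π hπ t => abs_histExp_le hν0 hν1 hP0 hP1 hπ t fun w y _ => norm_le_pi_norm V _
  have hU0 : ∀ π : List (Y × A) → Y → A → ℝ, validPol π → U π 0 = U πg 0 := by
    intro π hπ
    simp only [hUdef]
    rw [histExp_zero ν P hπ fun w y => V (sigAgg φ0 φ w y),
      histExp_zero ν P hvg fun w y => V (sigAgg φ0 φ w y)]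
  have hR0 : ∀ π : List (Y × A) → Y → A → ℝ, validPol π → ∀ t,
      0 ≤ γ ^ t * expRtime ν P r π t := fun π hπ t =>
    mul_nonneg (pow_nonneg hγ0.le _) (Finset.sum_nonneg fun v _ =>
      mul_nonneg (hPr π hπ _) (hr _ _).1)
  have hpart : ∀ π : List (Y × A) → Y → A → ℝ, validPol π → ∀ n,
      ∑ t ∈ Finset.range n, γ ^ t * expRtime ν P r π t + γ ^ n * U π n ≤ U π 0 := by
    intro π hπ n
    induction n with
    | zero => simp
    | succ n ih =>
      rw [Finset.sum_range_succ, pow_succ]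
      have := mul_le_mul_of_nonneg_left (hstep π hπ n) (pow_nonneg hγ0.le n)
      linarith
  have hpartg : ∀ n,
      ∑ t ∈ Finset.range n, γ ^ t * expRtime ν P r πg t + γ ^ n * U πg n = U πg 0 := by
    intro n
    induction n with
    | zero => simp
    | succ n ih =>
      rw [Finset.sum_range_succ, pow_succ, ← ih, ← hstepg n]
      ring
  have hlim : ∀ π : List (Y × A) → Y → A → ℝ, validPol π →
      Filter.Tendsto (fun n => γ ^ n * U π n) Filter.atTop (nhds 0) := by
    intro π hπ
    refine squeeze_zero_norm (a := fun n => γ ^ n * ‖V‖) (fun n => ?_) ?_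
    · rw [norm_mul, norm_pow, Real.norm_of_nonneg hγ0.le]
      exact mul_le_mul_of_nonneg_left (hUb π hπ n) (pow_nonneg hγ0.le n)
    · simpa using (tendsto_pow_atTop_nhds_zero_of_lt_one hγ0.le hγ1).mul_const ‖V‖
  have hsum : ∀ π : List (Y × A) → Y → A → ℝ, validPol π →
      Filter.Tendsto (fun n => ∑ t ∈ Finset.range n, γ ^ t * expRtime ν P r π t + γ ^ n * U π n)
        Filter.atTop (nhds (valJ γ ν P r π)) := by
    intro π hπ
    have hs : Summable fun t => γ ^ t * expRtime ν P r π t := by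
      refine summable_of_sum_range_le (c := U π 0 + ‖V‖) (hR0 π hπ) fun n => ?_
      have h1 := hpart π hπ n
      have h2 : -‖V‖ ≤ γ ^ n * U π n := by
        refine (abs_le.1 ?_).1
        rw [abs_mul, abs_of_nonneg (pow_nonneg hγ0.le n)]
        exact (mul_le_of_le_one_left (abs_nonneg _) (pow_le_one₀ hγ0.le hγ1.le)).trans
          (hUb π hπ n)
      linarith
    simpa [valJ] using hs.hasSum.tendsto_sum_nat.add (hlim π hπ)
  have hJg : valJ γ ν P r πg = U πg 0 :=
    tendsto_nhds_unique (hsum πg hvg) (by simp_rw [hpartg]; exact tendsto_const_nhds)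
  have hJ : ∀ π : List (Y × A) → Y → A → ℝ, validPol π → valJ γ ν P r π ≤ valJ γ ν P r πg := by
    intro π hπ
    rw [hJg, ← hU0 π hπ]
    exact le_of_tendsto' (hsum π hπ) (hpart π hπ)
  rw [ciSup_subtype_eq_of_forall_le hvg hJ,
    ciSup_subtype_eq_of_forall_le (p := fun π => validPol π ∧ isSD φ0 φ π)
      ⟨hvg, g, fun _ _ _ => rfl⟩ fun π hπ => hJ π hπ.1,
    ciSup_subtype_eq_of_forall_le (p := fun π => validPol π ∧ isSS φ0 φ π)
      ⟨hvg, fun z a => if a = g z then 1 else 0, fun _ _ => rfl⟩ fun π hπ => hJ π hπ.1,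
    ciSup_subtype_eq_of_forall_le (p := fun π => validPol π ∧ isND φ0 φ π)
      ⟨hvg, fun _ => g, fun _ _ _ => rfl⟩ fun π hπ => hJ π hπ.1,
    ciSup_subtype_eq_of_forall_le (p := fun π => validPol π ∧ isNS φ0 φ π)
      ⟨hvg, fun _ z a => if a = g z then 1 else 0, fun _ _ => rfl⟩ fun π hπ => hJ π hπ.1]
  exact ⟨rfl, rfl, rfl, rfl⟩

end
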